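/- For every n ≥ 2, the Chacon-type maps satisfy μ({x ∈ T² : U_n(x) ≠ U_{n−1}(x)}) ≤ 2·4^{1−n}. Consequently ∑_n μ({U_n ≠ U_{n−1}}) < ∞, and for μ-a.e. x the sequence (U_n(x))_{n≥1} is eventually constant. -/

import Mathlib

/-!
The map `U_n` differs from `U_{n-1}` only inside the rectangle `[1-4s,1) × [0,2s)`, `s = 2^{-n}`,
whose area is `8 s² = 2·4^{1-n}` (`chaconU_ne_subset`, `volume_chaconU_ne_le`). These bounds form
a convergent geometric series, so by the Borel-Cantelli lemma almost every point lies in only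
finitely many of the sets `{U_n ≠ U_{n-1}}`, and along such a point the sequence stabilises.
-/

open MeasureTheory Filter Set
open scoped ENNReal symmDiff

noncomputable section

instance fact01 : Fact ((0:ℝ) < 1) := ⟨one_pos⟩

/-- The two-dimensional torus `[0,1)²` with coordinatewise addition mod 1. -/
abbrev T2 : Type := AddCircle (1:ℝ) × AddCircle (1:ℝ)

/-- The canonical representative in `[0,1)` of a point of the circle. -/
noncomputable def rep (x : AddCircle (1:ℝ)) : ℝ := ((AddCircle.equivIco 1 0) x : ℝ)

/-- The point of the torus with coordinates `a`, `b` (mod 1). -/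
noncomputable def tv (a b : ℝ) : T2 := ((a : AddCircle (1:ℝ)), (b : AddCircle (1:ℝ)))

open Classical in
/-- The Chacon-type maps `U_n` on the torus. -/
noncomputable def chaconU : ℕ → T2 → T2
  | 0 => id
  | 1 => fun x =>
      if 0 ≤ rep x.1 ∧ rep x.1 < 1/2 ∧ 1/2 ≤ rep x.2 ∧ rep x.2 < 1 then x + tv (1/2) 0
      else if 1/2 ≤ rep x.1 ∧ rep x.1 < 1 ∧ 1/2 ≤ rep x.2 ∧ rep x.2 < 1 then
        x + tv (-(1/2)) (-(1/2))
      else if 0 ≤ rep x.1 ∧ rep x.1 < 1/2 ∧ 0 ≤ rep x.2 ∧ rep x.2 < 1/2 then x + tv 0 (1/2)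
      else x
  | (n+2) => fun x =>
      let s : ℝ := 1 / 2 ^ (n+2)
      let a := rep x.1
      let b := rep x.2
      if 1-4*s ≤ a ∧ a < 1-3*s ∧ s ≤ b ∧ b < 2*s then x + tv (5*s-1) (1-2*s)
      else if 1-3*s ≤ a ∧ a < 1-2*s ∧ s ≤ b ∧ b < 2*s then x + tv s 0
      else if 1-4*s ≤ a ∧ a < 1-3*s ∧ 0 ≤ b ∧ b < s then x + tv (3*s) s
      else if 1-3*s ≤ a ∧ a < 1-2*s ∧ 0 ≤ b ∧ b < s then x + tv s 0
      else if 1-2*s ≤ a ∧ a < 1 ∧ s ≤ b ∧ b < 2*s then x + tv (2*s-1) (1-3*s)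
      else if 1-2*s ≤ a ∧ a < 1-s ∧ 0 ≤ b ∧ b < s then x + tv (2*s-1) (1-s)
      else if 1-s ≤ a ∧ a < 1 ∧ 0 ≤ b ∧ b < s then x
      else chaconU (n+1) x

/-- An automorphism of the torus: measurable, bijective up to null sets with measurable
inverse, and measure-preserving. -/
def IsAutomorphism (U : T2 → T2) : Prop :=
  Measurable U ∧ ∃ V : T2 → T2, Measurable V ∧
    (∀ᵐ x ∂(volume : Measure T2), V (U x) = x) ∧
    (∀ᵐ x ∂(volume : Measure T2), U (V x) = x) ∧
    ∀ A : Set T2, MeasurableSet A → volume (U ⁻¹' A) = volume A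


lemma measurable_rep : Measurable rep :=
  measurable_subtype_coe.comp (AddCircle.measurableEquivIco (1:ℝ) 0).measurable

lemma rep_mem (x : AddCircle (1:ℝ)) : 0 ≤ rep x ∧ rep x < 1 := by
  have h : rep x ∈ Ico (0:ℝ) (0 + 1) := ((AddCircle.equivIco (1:ℝ) 0) x).2
  rwa [zero_add] at h

lemma volume_rep_le (a b : ℝ) :
    volume {x : AddCircle (1:ℝ) | rep x ∈ Ico a b} ≤ ENNReal.ofReal (b - a) := by
  have hm : MeasurableSet {x : AddCircle (1:ℝ) | rep x ∈ Ico a b} :=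
    measurable_rep measurableSet_Ico
  rw [AddCircle.add_projection_respects_measure (1:ℝ) 0 hm]
  -- The fundamental domain `(0,1]` differs from the range `[0,1)` of `rep` by the null set `{1}`.
  have hsub : QuotientAddGroup.mk ⁻¹' {x : AddCircle (1:ℝ) | rep x ∈ Ico a b} ∩ Ioc 0 (0 + 1) ⊆
      Ico a b ∪ {1} := by
    rintro y ⟨hy, h0, h1⟩
    rw [zero_add] at h1
    rcases h1.lt_or_eq with h | h
    · left
      have hr : rep (y : AddCircle (1:ℝ)) = y :=
        AddCircle.equivIco_coe_of_mem ⟨h0.le, by rwa [zero_add]⟩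
      have hy' : rep (y : AddCircle (1:ℝ)) ∈ Ico a b := hy
      rwa [hr] at hy'
    · right; exact h
  calc _ ≤ volume (Ico a b ∪ {1}) := measure_mono hsub
    _ ≤ volume (Ico a b) + volume ({1} : Set ℝ) := measure_union_le _ _
    _ = ENNReal.ofReal (b - a) := by simp

lemma chaconU_ne_subset (n : ℕ) :
    {x : T2 | chaconU (n+2) x ≠ chaconU (n+1) x} ⊆
      {x : AddCircle (1:ℝ) | rep x ∈ Ico (1 - 4 * (1 / 2 ^ (n+2))) 1} ×ˢ
        {x : AddCircle (1:ℝ) | rep x ∈ Ico 0 (2 * (1 / 2 ^ (n+2)))} := by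
  intro x hx
  by_contra hc
  apply hx
  have hs : (0:ℝ) < 1 / 2 ^ (n+2) := by positivity
  have h1 := rep_mem x.1
  have h2 := rep_mem x.2
  simp only [mem_prod, mem_ofPred_eq, mem_Ico] at hc
  rw [chaconU]
  generalize (1:ℝ) / 2 ^ (n+2) = s at hs hc
  dsimp only
  iterate 7
    rw [if_neg (fun h => hc ⟨⟨by linarith [h.1], h1.2⟩, h2.1, by linarith [h.2.2.2]⟩)]

lemma volume_chaconU_ne_le (n : ℕ) :
    volume {x : T2 | chaconU (n+2) x ≠ chaconU (n+1) x} ≤ 2 / 4 ^ (n+1) := by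
  refine (measure_mono (chaconU_ne_subset n)).trans ?_
  rw [Measure.volume_eq_prod, Measure.prod_prod]
  refine (mul_le_mul' (volume_rep_le _ _) (volume_rep_le _ _)).trans ?_
  rw [← ENNReal.ofReal_mul (by ring_nf; positivity)]
  have h : ((1:ℝ) - (1 - 4 * (1 / 2 ^ (n+2)))) * (2 * (1 / 2 ^ (n+2)) - 0) = 2 / 4 ^ (n+1) := by
    have h4 : (4:ℝ) ^ (n+1) = 2 ^ (n+1) * 2 ^ (n+1) := by rw [← mul_pow]; norm_num
    rw [h4, pow_succ (2:ℝ) (n+1)]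
    field_simp
    ring
  rw [h, ENNReal.ofReal_div_of_pos (by positivity), ENNReal.ofReal_pow (by norm_num)]
  norm_num

lemma tsum_volume_chaconU_ne_lt_top :
    (∑' n : ℕ, volume {x : T2 | chaconU (n+2) x ≠ chaconU (n+1) x}) < ⊤ := by
  have hsum : Summable (fun n : ℕ => (2:ℝ) / 4 ^ (n+1)) := by
    have := (summable_geometric_of_lt_one (r := (1/4:ℝ)) (by norm_num) (by norm_num)).mul_left (1/2)
    refine this.congr fun n => ?_
    rw [pow_succ, one_div_pow]
    field_simp
    norm_num
  refine lt_of_le_of_lt (ENNReal.tsum_le_tsum volume_chaconU_ne_le) ?_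
  have he : ∀ n : ℕ, (2:ℝ≥0∞) / 4 ^ (n+1) = ENNReal.ofReal (2 / 4 ^ (n+1)) := by
    intro n
    rw [ENNReal.ofReal_div_of_pos (by positivity), ENNReal.ofReal_pow (by norm_num)]
    norm_num
  simp_rw [he]
  exact hsum.tsum_ofReal_lt_top

/-- `μ({U_n ≠ U_{n-1}}) ≤ 2·4^{1-n}` for `n ≥ 2`; hence the series of these measures
converges, and for a.e. `x` the sequence `(U_n(x))` is eventually constant. -/
theorem chacon_approximation :
    (∀ n : ℕ, 2 ≤ n →
      volume {x : T2 | chaconU n x ≠ chaconU (n-1) x} ≤ 2 / 4 ^ (n-1)) ∧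
    (∑' n : ℕ, volume {x : T2 | chaconU (n+2) x ≠ chaconU (n+1) x}) < ⊤ ∧
    (∀ᵐ x ∂(volume : Measure T2), ∃ N : ℕ, ∀ n, N ≤ n → chaconU n x = chaconU N x) := by
  refine ⟨fun n hn => ?_, tsum_volume_chaconU_ne_lt_top, ?_⟩
  · obtain ⟨m, rfl⟩ := Nat.exists_eq_add_of_le' hn
    exact volume_chaconU_ne_le m
  · filter_upwards [ae_eventually_notMem tsum_volume_chaconU_ne_lt_top.ne] with x hx
    obtain ⟨N, hN⟩ := eventually_atTop.1 hx
    refine ⟨N + 1, fun n hn => ?_⟩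
    induction n, hn using Nat.le_induction with
    | base => rfl
    | succ k hk ih =>
      obtain ⟨m, rfl⟩ := Nat.exists_eq_add_of_le' (show 1 ≤ k by omega)
      have h := not_not.1 (hN m (by omega))
      exact h.trans ih

end
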